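/- Let k be a positive integer and let a ≤ b ≤ c be nonnegative integers. There exist an n and a cap S ⊆ 𝔽₂ⁿ with |S| = k and dim(S) = k − 3 such that, for some basis X₁, X₂ of E(S), the three Venn regions of S other than the isolated point set have cardinalities a, b, c, if and only if: (1) a + b + c ≤ k; (2) a, b, and c all have the same parity; and (3) a + b ≥ 6. -/

import Mathlib

/-! Suppose first that `X₁, …, X_r` is a basis of `E(S)` for a cap `S`. The combination of the `X_i`
with coefficient vector `a ≠ 0` is a nonempty even zero-sum set; it does not have two elements,
since distinct vectors do not sum to zero, nor four, since `S` is a cap, so it has at least six. Its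
cardinality is the sum of the sizes of the Venn regions `b` with `a ⬝ᵥ b = 1`. For `r = 2` these
are the pairwise sums of the three region sizes.

Conversely, choose subsets `Y₁, …, Y_r` of an abstract index set with the prescribed region sizes,
and let `C` be the binary code spanned by their indicator vectors. The images of the standard basis
vectors in the quotient by `C` have exactly the words of `C` as their affine relations. Every
nonzero word of `C` has even weight at least six, so these points are distinct and form a cap `S`,
and `E(S)` is `C`. As `|S| = dim S + 1 + dim C`, the dimension of `S` is `|S| - r - 1`. -/

open scoped symmDiff

/-- `zSet X a` is the symmetric difference of the sets `X i` over the indices `i` with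
`a i = 1` (with `zSet X 0 = ∅`). -/
def zSet {α : Type*} [DecidableEq α] {r : ℕ} (X : Fin r → Finset α)
    (a : Fin r → ZMod 2) : Finset α :=
  (Finset.univ.filter (fun i => a i = 1)).fold (· ∆ ·) ∅ X

/-- The Venn region of `S` with respect to `X₁, …, X_r` determined by `a ∈ 𝔽₂^r`. -/
def vennRegion {α : Type*} [DecidableEq α] {r : ℕ} (S : Finset α)
    (X : Fin r → Finset α) (a : Fin r → ZMod 2) : Finset α :=
  S.filter (fun x => ∀ i, x ∈ X i ↔ a i = 1)

/-- `E(S)`: the collection of all even zero-sum subsets of `S ⊆ 𝔽₂ⁿ`. -/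
def evenZeroSums {n : ℕ} (S : Finset (Fin n → ZMod 2)) :
    Set (Finset (Fin n → ZMod 2)) :=
  {X | X ⊆ S ∧ Even X.card ∧ (∑ x ∈ X, x) = 0}

/-- The dimension of a subset `S ⊆ 𝔽₂ⁿ`: the dimension of its affine span. -/
noncomputable def affDim {n : ℕ} (S : Finset (Fin n → ZMod 2)) : ℕ :=
  Module.finrank (ZMod 2) (affineSpan (ZMod 2) (S : Set (Fin n → ZMod 2))).direction

/-- A subset `S ⊆ 𝔽₂ⁿ` is a cap (Sidon set) if no four distinct elements of `S` sum to
the zero vector. -/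
def IsCap {n : ℕ} (S : Finset (Fin n → ZMod 2)) : Prop :=
  ∀ w ∈ S, ∀ x ∈ S, ∀ y ∈ S, ∀ z ∈ S,
    w ≠ x → w ≠ y → w ≠ z → x ≠ y → x ≠ z → y ≠ z → w + x + y + z ≠ 0

section SymmDiffCombinations

variable {α β : Type*} [DecidableEq α] [DecidableEq β] {r : ℕ}

/-- The indicator vector of a finite set, with entries in `𝔽₂`; it turns symmetric differences into
sums. -/
def indicatorVec (U : Finset α) (x : α) : ZMod 2 := if x ∈ U then 1 else 0

lemma indicatorVec_eq_one_iff {U : Finset α} {x : α} : indicatorVec U x = 1 ↔ x ∈ U := by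
  simp [indicatorVec]

lemma indicatorVec_injective : Function.Injective (indicatorVec (α := α)) := fun U V h => by
  ext x
  rw [← indicatorVec_eq_one_iff, h, indicatorVec_eq_one_iff]

lemma indicatorVec_symmDiff (U V : Finset α) :
    indicatorVec (U ∆ V) = indicatorVec U + indicatorVec V := by
  ext x
  by_cases hU : x ∈ U <;> by_cases hV : x ∈ V <;>
    simp [indicatorVec, Finset.mem_symmDiff, hU, hV, CharTwo.add_self_eq_zero]

lemma indicatorVec_empty : indicatorVec (∅ : Finset α) = 0 := by
  ext x
  simp [indicatorVec]

lemma indicatorVec_zSet (X : Fin r → Finset α) (a : Fin r → ZMod 2) :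
    indicatorVec (zSet X a) =
      Fintype.linearCombination (ZMod 2) (fun i => indicatorVec (X i)) a := by
  have smul_eq_ite (x : ZMod 2) (v : α → ZMod 2) : x • v = if x = 1 then v else 0 := by
    obtain rfl | rfl : x = 0 ∨ x = 1 := by decide +revert
    all_goals simp
  have hfold := Finset.fold_hom (s := {i | a i = 1}) (b := ∅) (f := X) (op' := (· + ·))
    (m := indicatorVec) indicatorVec_symmDiff
  rw [indicatorVec_empty, ← Finset.sum_eq_fold, Finset.sum_filter] at hfold
  simp only [Fintype.linearCombination_apply, smul_eq_ite]
  exact hfold.symm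

lemma indicatorVec_mem_range_linearCombination_iff {X : Fin r → Finset α} {U : Finset α} :
    indicatorVec U ∈
        LinearMap.range (Fintype.linearCombination (ZMod 2) fun i => indicatorVec (X i)) ↔
      U ∈ Set.range (zSet X) := by
  simp only [LinearMap.mem_range, ← indicatorVec_zSet, indicatorVec_injective.eq_iff,
    Set.mem_range]

lemma zSet_injective_iff_linearCombination_injective {X : Fin r → Finset α} :
    Function.Injective (zSet X) ↔ Function.Injective
      (Fintype.linearCombination (ZMod 2) fun i => indicatorVec (X i)) := by
  rw [← indicatorVec_injective.of_comp_iff]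
  exact iff_of_eq (congrArg _ (funext (indicatorVec_zSet X)))

lemma zSet_injective_iff_forall_nonempty {X : Fin r → Finset α} :
    Function.Injective (zSet X) ↔ ∀ a ≠ 0, (zSet X a).Nonempty := by
  rw [zSet_injective_iff_linearCombination_injective, injective_iff_map_eq_zero]
  refine forall_congr' fun a => ?_
  rw [← indicatorVec_zSet, ← indicatorVec_empty, indicatorVec_injective.eq_iff,
    Finset.nonempty_iff_ne_empty, not_imp_not]

lemma zSet_zero (X : Fin r → Finset α) : zSet X 0 = ∅ := by
  simp [zSet]

lemma zSet_map (f : α ↪ β) (X : Fin r → Finset α) (a : Fin r → ZMod 2) :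
    zSet (fun i => (X i).map f) a = (zSet X a).map f := by
  simp only [Finset.map_eq_image]
  exact Finset.fold_hom (b := ∅) (op' := (· ∆ ·)) (m := Finset.image f)
    fun U V => Finset.image_symmDiff U V f.injective

end SymmDiffCombinations

section VennRegions

variable {α β : Type*} [DecidableEq α] [DecidableEq β] {r : ℕ}

/-- The index of the Venn region of `X₁, …, X_r` in which `x` lies. -/
def vennIndex (X : Fin r → Finset α) (x : α) (i : Fin r) : ZMod 2 := indicatorVec (X i) x

lemma vennRegion_eq_filter (S : Finset α) (X : Fin r → Finset α) (a : Fin r → ZMod 2) :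
    vennRegion S X a = {x ∈ S | vennIndex X x = a} := by
  have iff_eq_one (u v : ZMod 2) : u = v ↔ (u = 1 ↔ v = 1) := by decide +revert
  refine Finset.filter_congr fun x _ => ?_
  rw [funext_iff]
  refine forall_congr' fun i => ?_
  rw [iff_eq_one (vennIndex X x i), vennIndex, indicatorVec_eq_one_iff]

lemma mem_zSet_iff {X : Fin r → Finset α} {a : Fin r → ZMod 2} {x : α} :
    x ∈ zSet X a ↔ a ⬝ᵥ vennIndex X x = 1 := by
  simp [← indicatorVec_eq_one_iff, indicatorVec_zSet, Fintype.linearCombination_apply,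
    dotProduct, vennIndex]

lemma zSet_subset {S : Finset α} {X : Fin r → Finset α} (hX : ∀ i, X i ⊆ S)
    (a : Fin r → ZMod 2) : zSet X a ⊆ S := by
  intro x hx
  by_contra hxS
  have hindex : vennIndex X x = 0 := funext fun i => if_neg fun hxi => hxS (hX i hxi)
  simp [mem_zSet_iff, hindex] at hx

lemma card_eq_sum_card_vennRegion (S : Finset α) (X : Fin r → Finset α) :
    S.card = ∑ b, (vennRegion S X b).card := by
  simp only [vennRegion_eq_filter]
  exact Finset.card_eq_sum_card_fiberwise fun _ _ => Finset.mem_univ _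

lemma card_zSet {S : Finset α} {X : Fin r → Finset α} (hX : ∀ i, X i ⊆ S)
    (a : Fin r → ZMod 2) :
    (zSet X a).card = ∑ b with a ⬝ᵥ b = 1, (vennRegion S X b).card := by
  rw [Finset.card_eq_sum_card_fiberwise (f := vennIndex X)
    (t := {b : Fin r → ZMod 2 | a ⬝ᵥ b = 1})
    fun x hx => by simpa [mem_zSet_iff] using hx]
  refine Finset.sum_congr rfl fun b hb => congrArg _ ?_
  ext x
  simp only [vennRegion_eq_filter, Finset.mem_filter, Finset.mem_univ, true_and] at hb ⊢
  exact and_congr_left fun hxb =>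
    ⟨fun hx => zSet_subset hX a hx, fun _ => mem_zSet_iff.2 (hxb ▸ hb)⟩

lemma vennRegion_map (f : α ↪ β) (S : Finset α) (X : Fin r → Finset α) (a : Fin r → ZMod 2) :
    vennRegion (S.map f) (fun i => (X i).map f) a = (vennRegion S X a).map f := by
  simp [vennRegion, Finset.filter_map]

lemma card_vennRegion_sigma_fst (m : (Fin r → ZMod 2) → ℕ) (a : Fin r → ZMod 2) :
    (vennRegion Finset.univ
      (fun i => ({x | x.1 i = 1} : Finset (Σ b : Fin r → ZMod 2, Fin (m b)))) a).card = m a := by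
  have hregion : vennRegion Finset.univ
      (fun i => ({x | x.1 i = 1} : Finset (Σ b : Fin r → ZMod 2, Fin (m b)))) a =
      ({a} : Finset _).sigma fun _ => Finset.univ := by
    have vennIndex_eq_fst (x : Σ b : Fin r → ZMod 2, Fin (m b)) :
        vennIndex (fun i => ({x | x.1 i = 1} : Finset (Σ b : Fin r → ZMod 2, Fin (m b)))) x =
          x.1 := by
      have ite_eq_self (u : ZMod 2) : (if u = 1 then 1 else 0) = u := by decide +revert
      ext i
      simp [vennIndex, indicatorVec, ite_eq_self]
    ext x
    simp [vennRegion_eq_filter, vennIndex_eq_fst]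
  simp [hregion]

end VennRegions

section AffineRelations

variable (K : Type*) {V ι : Type*} [Ring K] [AddCommGroup V] [Module K V] [Fintype ι]

/-- The affine relations of a finite family `p` of vectors: the coefficient vectors `w` with
`∑ i, w i • p i = 0` and `∑ i, w i = 0`. Over `𝔽₂` these are the indicator vectors of the even
zero-sum sets. -/
def affineRelations (p : ι → V) : Submodule K (ι → K) :=
  LinearMap.ker (Fintype.linearCombination K p) ⊓
    LinearMap.ker (Fintype.linearCombination K (1 : ι → K))

lemma vectorSpan_range_eq_map_ker (p : ι → V) :
    vectorSpan K (Set.range p) = (LinearMap.ker (Fintype.linearCombination K (1 : ι → K))).map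
      (Fintype.linearCombination K p) := by
  classical
  apply le_antisymm
  · rw [vectorSpan_def, Submodule.span_le]
    rintro _ ⟨_, ⟨i, rfl⟩, _, ⟨j, rfl⟩, rfl⟩
    exact ⟨Pi.single i 1 - Pi.single j 1, by simp, by simp⟩
  · rintro _ ⟨w, hw, rfl⟩
    have hw : ∑ i, w i = 0 := by simpa [Fintype.linearCombination_apply] using hw
    rw [Fintype.linearCombination_apply, ← Finset.weightedVSub_eq_linear_combination _ hw]
    exact weightedVSub_mem_vectorSpan hw p

end AffineRelations

section AffineRelationsOverField

variable (K : Type*) {V ι : Type*} [Field K] [AddCommGroup V] [Module K V] [Fintype ι]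

lemma finrank_vectorSpan_range_add_finrank_affineRelations [Nonempty ι] (p : ι → V) :
    Module.finrank K (vectorSpan K (Set.range p)) + Module.finrank K (affineRelations K p) + 1 =
      Fintype.card ι := by
  classical
  set H := LinearMap.ker (Fintype.linearCombination K (1 : ι → K))
  have hH : Module.finrank K H + 1 = Fintype.card ι := by
    rw [Module.Dual.finrank_ker_add_one_of_ne_zero, Module.finrank_fintype_fun_eq_card]
    intro h
    obtain ⟨i⟩ := ‹Nonempty ι›
    simpa using LinearMap.congr_fun h (Pi.single i 1)
  have hrank := ((Fintype.linearCombination K p).domRestrict H).finrank_range_add_finrank_ker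
  rw [LinearMap.range_domRestrict, ← vectorSpan_range_eq_map_ker, LinearMap.ker_domRestrict,
    ← Submodule.finrank_map_subtype_eq, Submodule.map_comap_subtype, inf_comm] at hrank
  exact hH ▸ congrArg (· + 1) hrank

lemma exists_affineRelations_eq {C : Submodule K (ι → K)}
    (hC : C ≤ LinearMap.ker (Fintype.linearCombination K (1 : ι → K))) :
    ∃ (n : ℕ) (p : ι → Fin n → K), affineRelations K p = C := by
  classical
  let φ := (Module.finBasis K ((ι → K) ⧸ C)).equivFun.toLinearMap ∘ₗ C.mkQ
  -- The points are the images of the standard basis vectors in the quotient by `C`.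
  refine ⟨_, fun i => φ (Pi.single i 1), ?_⟩
  have hφ : Fintype.linearCombination K (fun i => φ (Pi.single i 1)) = φ := by
    ext i : 2
    simp
  rw [affineRelations, hφ, LinearEquiv.ker_comp, Submodule.ker_mkQ]
  exact inf_of_le_left hC

end AffineRelationsOverField

section EvenZeroSums

variable {n r : ℕ}

lemma isCap_iff_six_le_card {S : Finset (Fin n → ZMod 2)} :
    IsCap S ↔ ∀ T ∈ evenZeroSums S, T.Nonempty → 6 ≤ T.card := by
  constructor
  · rintro hS T ⟨hTS, heven, hsum⟩ hT
    have hcard_two : T.card ≠ 2 := by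
      intro h
      obtain ⟨x, y, hxy, rfl⟩ := Finset.card_eq_two.1 h
      rw [Finset.sum_pair hxy] at hsum
      exact hxy (sub_eq_zero.1 (ZModModule.sub_eq_add x y ▸ hsum))
    have hcard_four : T.card ≠ 4 := by
      intro h
      obtain ⟨w, x, y, z, hwx, hwy, hwz, hxy, hxz, hyz, rfl⟩ := Finset.card_eq_four.1 h
      refine hS w (hTS (by simp)) x (hTS (by simp)) y (hTS (by simp)) z (hTS (by simp))
        hwx hwy hwz hxy hxz hyz ?_
      simpa [hwx, hwy, hwz, hxy, hxz, hyz, add_assoc] using hsum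
    have := hT.card_pos
    grind
  · intro h w hw x hx y hy z hz hwx hwy hwz hxy hxz hyz hsum
    have hcard : ({w, x, y, z} : Finset (Fin n → ZMod 2)).card = 4 :=
      Finset.card_eq_four.2 ⟨w, x, y, z, hwx, hwy, hwz, hxy, hxz, hyz, rfl⟩
    have hmem : {w, x, y, z} ∈ evenZeroSums S :=
      ⟨by simp [Finset.insert_subset_iff, hw, hx, hy, hz], hcard ▸ by decide,
        by simpa [hwx, hwy, hwz, hxy, hxz, hyz, add_assoc] using hsum⟩
    have := h _ hmem (by simp)
    omega

lemma IsCap.even_and_six_le_sum_card_vennRegion {S : Finset (Fin n → ZMod 2)}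
    {X : Fin r → Finset (Fin n → ZMod 2)} (hS : IsCap S)
    (hrange : Set.range (zSet X) = evenZeroSums S) (hinj : Function.Injective (zSet X))
    (a : Fin r → ZMod 2) (ha : a ≠ 0) :
    Even (∑ b with a ⬝ᵥ b = 1, (vennRegion S X b).card) ∧
      6 ≤ ∑ b with a ⬝ᵥ b = 1, (vennRegion S X b).card := by
  have hX (i) : X i ⊆ S := by
    have hi : X i ∈ evenZeroSums S := by
      rw [← hrange, ← indicatorVec_mem_range_linearCombination_iff]
      exact ⟨Pi.single i 1, by simp⟩
    exact hi.1
  have hmem : zSet X a ∈ evenZeroSums S := hrange ▸ ⟨a, rfl⟩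
  rw [← card_zSet hX]
  exact ⟨hmem.2.1, isCap_iff_six_le_card.1 hS _ hmem
    (zSet_injective_iff_forall_nonempty.1 hinj a ha)⟩

variable {ι : Type*} [Fintype ι]

lemma affDim_map_univ (p : ι ↪ Fin n → ZMod 2) :
    affDim (Finset.univ.map p) = Module.finrank (ZMod 2) (vectorSpan (ZMod 2) (Set.range p)) := by
  rw [affDim, direction_affineSpan, Finset.coe_map, Finset.coe_univ, Set.image_univ]

variable [DecidableEq ι]

lemma linearCombination_indicatorVec {V : Type*} [AddCommGroup V] [Module (ZMod 2) V]
    (p : ι → V) (U : Finset ι) :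
    Fintype.linearCombination (ZMod 2) p (indicatorVec U) = ∑ i ∈ U, p i := by
  simp [Fintype.linearCombination_apply, indicatorVec, ite_smul]

lemma indicatorVec_mem_ker_linearCombination_one {U : Finset ι} :
    indicatorVec U ∈ LinearMap.ker (Fintype.linearCombination (ZMod 2) (1 : ι → ZMod 2)) ↔
      Even U.card := by
  simp [linearCombination_indicatorVec, ZMod.natCast_eq_zero_iff_even]

lemma map_mem_evenZeroSums_iff (p : ι ↪ Fin n → ZMod 2) (U : Finset ι) :
    U.map p ∈ evenZeroSums (Finset.univ.map p) ↔ indicatorVec U ∈ affineRelations (ZMod 2) p := by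
  rw [affineRelations, Submodule.mem_inf, indicatorVec_mem_ker_linearCombination_one,
    LinearMap.mem_ker, linearCombination_indicatorVec]
  simp [evenZeroSums, and_comm]

lemma isCap_map_univ_iff {p : ι ↪ Fin n → ZMod 2} :
    IsCap (Finset.univ.map p) ↔
      ∀ U, indicatorVec U ∈ affineRelations (ZMod 2) p → U.Nonempty → 6 ≤ U.card := by
  rw [isCap_iff_six_le_card]
  simp only [← map_mem_evenZeroSums_iff]
  constructor
  · intro h U hU hne
    simpa using h _ hU (hne.map)
  · intro h T hT hne
    obtain ⟨U, -, rfl⟩ := Finset.subset_map_iff.1 hT.1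
    rw [Finset.card_map]
    exact h U hT (Finset.map_nonempty.1 hne)

lemma injective_of_forall_card_ne_two {p : ι → Fin n → ZMod 2}
    (hp : ∀ U, indicatorVec U ∈ affineRelations (ZMod 2) p → U.card ≠ 2) :
    Function.Injective p := by
  intro i j hij
  by_contra hne
  have hcard : ({i, j} : Finset ι).card = 2 := Finset.card_pair hne
  refine hp {i, j} ⟨?_, indicatorVec_mem_ker_linearCombination_one.2 (hcard ▸ even_two)⟩ hcard
  rw [SetLike.mem_coe, LinearMap.mem_ker, linearCombination_indicatorVec, Finset.sum_pair hne, hij,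
    ZModModule.add_self]

lemma range_zSet_map_eq_evenZeroSums {p : ι ↪ Fin n → ZMod 2} {Y : Fin r → Finset ι}
    (hp : affineRelations (ZMod 2) p =
      LinearMap.range (Fintype.linearCombination (ZMod 2) fun i => indicatorVec (Y i))) :
    Set.range (zSet fun i => (Y i).map p) = evenZeroSums (Finset.univ.map p) := by
  have map_mem_iff (U : Finset ι) :
      U.map p ∈ evenZeroSums (Finset.univ.map p) ↔ U ∈ Set.range (zSet Y) := by
    rw [map_mem_evenZeroSums_iff, hp, indicatorVec_mem_range_linearCombination_iff]
  ext T
  constructor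
  · rintro ⟨a, rfl⟩
    rw [zSet_map, map_mem_iff]
    exact Set.mem_range_self a
  · intro hT
    obtain ⟨U, -, rfl⟩ := Finset.subset_map_iff.1 hT.1
    obtain ⟨a, rfl⟩ := (map_mem_iff U).1 hT
    exact ⟨a, zSet_map p Y a⟩

lemma range_linearCombination_le_ker_one {Y : Fin r → Finset ι}
    (hY : ∀ a, Even (zSet Y a).card) :
    LinearMap.range (Fintype.linearCombination (ZMod 2) fun i => indicatorVec (Y i)) ≤
      LinearMap.ker (Fintype.linearCombination (ZMod 2) (1 : ι → ZMod 2)) := by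
  rintro _ ⟨a, rfl⟩
  rw [← indicatorVec_zSet, indicatorVec_mem_ker_linearCombination_one]
  exact hY a

lemma exists_isCap_map_univ [Nonempty ι] {Y : Fin r → Finset ι}
    (hY : ∀ a ≠ 0, Even (zSet Y a).card ∧ 6 ≤ (zSet Y a).card) :
    ∃ (n : ℕ) (p : ι ↪ Fin n → ZMod 2),
      IsCap (Finset.univ.map p) ∧ affDim (Finset.univ.map p) + r + 1 = Fintype.card ι ∧
      Set.range (zSet fun i => (Y i).map p) = evenZeroSums (Finset.univ.map p) ∧
      Function.Injective (zSet fun i => (Y i).map p) := by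
  have hnonempty (a) (ha : a ≠ 0) : (zSet Y a).Nonempty :=
    Finset.card_pos.1 (by have := (hY a ha).2; omega)
  have heven (a) : Even (zSet Y a).card := by
    obtain rfl | ha := eq_or_ne a 0
    · simp [zSet_zero]
    · exact (hY a ha).1
  obtain ⟨n, p, hp⟩ := exists_affineRelations_eq (ZMod 2) (range_linearCombination_le_ker_one heven)
  have hweight (U : Finset ι) (hU : indicatorVec U ∈ affineRelations (ZMod 2) p)
      (hne : U.Nonempty) : 6 ≤ U.card := by
    rw [hp, indicatorVec_mem_range_linearCombination_iff] at hU
    obtain ⟨a, rfl⟩ := hU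
    refine (hY a ?_).2
    rintro rfl
    simp [zSet_zero] at hne
  have hinj : Function.Injective p := injective_of_forall_card_ne_two fun U hU h => by
    have := hweight U hU (Finset.card_pos.1 (by omega))
    omega
  lift p to ι ↪ Fin n → ZMod 2 using hinj
  refine ⟨n, p, isCap_map_univ_iff.2 hweight, ?_, range_zSet_map_eq_evenZeroSums hp,
    zSet_injective_iff_forall_nonempty.2 fun a ha => ?_⟩
  · rw [affDim_map_univ, ← finrank_vectorSpan_range_add_finrank_affineRelations (ZMod 2) p, hp,
      LinearMap.finrank_range_of_inj (zSet_injective_iff_linearCombination_injective.1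
        (zSet_injective_iff_forall_nonempty.2 hnonempty)), Module.finrank_fin_fun]
  · rw [zSet_map, Finset.map_nonempty]
    exact hnonempty a ha

lemma exists_isCap_card_vennRegion_eq {m : (Fin r → ZMod 2) → ℕ} (hpos : 0 < ∑ a, m a)
    (hm : ∀ a ≠ 0, Even (∑ b with a ⬝ᵥ b = 1, m b) ∧ 6 ≤ ∑ b with a ⬝ᵥ b = 1, m b) :
    ∃ (n : ℕ) (S : Finset (Fin n → ZMod 2)) (X : Fin r → Finset (Fin n → ZMod 2)),
      IsCap S ∧ S.card = ∑ a, m a ∧ affDim S + r + 1 = ∑ a, m a ∧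
      (Set.range (zSet X) = evenZeroSums S ∧ Function.Injective (zSet X)) ∧
      ∀ a, (vennRegion S X a).card = m a := by
  let Y : Fin r → Finset (Σ a : Fin r → ZMod 2, Fin (m a)) := fun i => {x | x.1 i = 1}
  have hcard : Fintype.card (Σ a : Fin r → ZMod 2, Fin (m a)) = ∑ a, m a := by simp
  have : Nonempty (Σ a : Fin r → ZMod 2, Fin (m a)) := Fintype.card_pos_iff.1 (hcard ▸ hpos)
  obtain ⟨n, p, hcap, hdim, hbasis⟩ := exists_isCap_map_univ (Y := Y) fun a ha => by
    simpa only [card_zSet fun i => (Y i).subset_univ, Y, card_vennRegion_sigma_fst] using hm a ha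
  exact ⟨n, _, _, hcap, by rw [Finset.card_map, Finset.card_univ, hcard], hdim.trans hcard, hbasis,
    fun a => by rw [vennRegion_map, Finset.card_map, card_vennRegion_sigma_fst]⟩

end EvenZeroSums

section TwoSets

lemma exists_fin_two_arrow_zmod_two_eq {α : Type*} (a b c d : α) :
    ∃ m : (Fin 2 → ZMod 2) → α, m ![0, 0] = d ∧ m ![1, 0] = a ∧ m ![0, 1] = b ∧ m ![1, 1] = c :=
  ⟨fun s => if s = ![1, 0] then a else if s = ![0, 1] then b else if s = ![1, 1] then c else d,
    by simp⟩

lemma sum_fin_two_arrow_zmod_two {M : Type*} [AddCommMonoid M] (m : (Fin 2 → ZMod 2) → M) :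
    ∑ a, m a = m ![0, 0] + (m ![1, 0] + (m ![0, 1] + m ![1, 1])) := by
  rw [show (Finset.univ : Finset (Fin 2 → ZMod 2)) = {![0, 0], ![1, 0], ![0, 1], ![1, 1]} by decide]
  simp

lemma forall_fin_two_arrow_zmod_two_ne_zero_iff {P : (Fin 2 → ZMod 2) → Prop} :
    (∀ a ≠ 0, P a) ↔ P ![1, 0] ∧ P ![0, 1] ∧ P ![1, 1] := by
  have eq_of_ne_zero (a : Fin 2 → ZMod 2) (ha : a ≠ 0) :
      a = ![1, 0] ∨ a = ![0, 1] ∨ a = ![1, 1] := by decide +revert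
  constructor
  · exact fun h => ⟨h _ (by decide), h _ (by decide), h _ (by decide)⟩
  · rintro ⟨h10, h01, h11⟩ a ha
    obtain rfl | rfl | rfl := eq_of_ne_zero a ha
    exacts [h10, h01, h11]

lemma forall_mem_powersetCard_two_triple_iff {α : Type*} {a b c : α} {P : Multiset α → Prop} :
    (∀ t ∈ Multiset.powersetCard 2 {a, b, c}, P t) ↔ P {b, c} ∧ P {a, c} ∧ P {a, b} := by
  have hpairs : Multiset.powersetCard 2 {a, b, c} = {{b, c}, {a, c}, {a, b}} := rfl
  rw [hpairs]
  simp

lemma forall_ne_zero_sum_dotProduct_iff (m : (Fin 2 → ZMod 2) → ℕ) (P : ℕ → Prop) :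
    (∀ a ≠ 0, P (∑ b with a ⬝ᵥ b = 1, m b)) ↔
      ∀ t ∈ Multiset.powersetCard 2 {m ![1, 0], m ![0, 1], m ![1, 1]}, P t.sum := by
  have h10 : ({b | ![1, 0] ⬝ᵥ b = 1} : Finset (Fin 2 → ZMod 2)) = {![1, 0], ![1, 1]} := by decide
  have h01 : ({b | ![0, 1] ⬝ᵥ b = 1} : Finset (Fin 2 → ZMod 2)) = {![0, 1], ![1, 1]} := by decide
  have h11 : ({b | ![1, 1] ⬝ᵥ b = 1} : Finset (Fin 2 → ZMod 2)) = {![1, 0], ![0, 1]} := by decide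
  rw [forall_fin_two_arrow_zmod_two_ne_zero_iff, h10, h01, h11]
  rw [forall_mem_powersetCard_two_triple_iff]
  simp only [Multiset.insert_eq_cons, Multiset.sum_cons, Multiset.sum_singleton]
  rw [Finset.sum_pair (by decide), Finset.sum_pair (by decide), Finset.sum_pair (by decide)]
  tauto

lemma forall_mem_powersetCard_two_iff {a b c : ℕ} (hab : a ≤ b) (hbc : b ≤ c) :
    (∀ t ∈ Multiset.powersetCard 2 {a, b, c}, Even t.sum ∧ 6 ≤ t.sum) ↔
      (Even a ↔ Even b) ∧ (Even b ↔ Even c) ∧ 6 ≤ a + b := by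
  rw [forall_mem_powersetCard_two_triple_iff]
  simp only [Multiset.insert_eq_cons, Multiset.sum_cons, Multiset.sum_singleton, Nat.even_add]
  constructor
  · tauto
  · rintro ⟨hparity_ab, hparity_bc, hle⟩
    exact ⟨⟨by tauto, by omega⟩, ⟨by tauto, by omega⟩, by tauto, hle⟩

end TwoSets

/-- Let `k` be a positive integer and `a ≤ b ≤ c` nonnegative integers.  There exist an
`n` and a cap `S ⊆ 𝔽₂ⁿ` with `|S| = k` and `dim S = k − 3` such that, for some basis
`X₁, X₂` of `E(S)`, the three Venn regions of `S` other than the isolated point set have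
cardinalities `a, b, c`, if and only if: (1) `a + b + c ≤ k`; (2) `a`, `b`, `c` all have
the same parity; and (3) `a + b ≥ 6`. -/
theorem stmt_19 (k : ℕ) (hk : 0 < k) (a b c : ℕ) (hab : a ≤ b) (hbc : b ≤ c) :
    (∃ (n : ℕ) (S : Finset (Fin n → ZMod 2))
        (X : Fin 2 → Finset (Fin n → ZMod 2)),
      IsCap S ∧ S.card = k ∧ affDim S = k - 3 ∧
      (Set.range (zSet X) = evenZeroSums S ∧ Function.Injective (zSet X)) ∧
      ({(vennRegion S X ![1, 0]).card, (vennRegion S X ![0, 1]).card,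
          (vennRegion S X ![1, 1]).card} : Multiset ℕ) = {a, b, c}) ↔
      (a + b + c ≤ k ∧ (Even a ↔ Even b) ∧ (Even b ↔ Even c) ∧ 6 ≤ a + b) := by
  constructor
  · rintro ⟨n, S, X, hS, rfl, -, ⟨hrange, hinj⟩, habc⟩
    have hpairs := (forall_ne_zero_sum_dotProduct_iff _ fun w => Even w ∧ 6 ≤ w).1
      (hS.even_and_six_le_sum_card_vennRegion hrange hinj)
    rw [habc, forall_mem_powersetCard_two_iff hab hbc] at hpairs
    refine ⟨?_, hpairs⟩
    have hsum := congrArg Multiset.sum habc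
    have hcard := card_eq_sum_card_vennRegion S X
    rw [sum_fin_two_arrow_zmod_two] at hcard
    simp only [Multiset.insert_eq_cons, Multiset.sum_cons, Multiset.sum_singleton] at hsum
    omega
  · rintro ⟨hle, hpairs⟩
    obtain ⟨m, h00, h10, h01, h11⟩ := exists_fin_two_arrow_zmod_two_eq a b c (k - (a + b + c))
    have hm : ∑ s, m s = k := by
      rw [sum_fin_two_arrow_zmod_two]
      omega
    rw [← forall_mem_powersetCard_two_iff hab hbc, ← h10, ← h01, ← h11,
      ← forall_ne_zero_sum_dotProduct_iff m fun w => Even w ∧ 6 ≤ w] at hpairs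
    obtain ⟨n, S, X, hS, hcard, hdim, hbasis, hregion⟩ :=
      exists_isCap_card_vennRegion_eq (hm ▸ hk) hpairs
    exact ⟨n, S, X, hS, by omega, by omega, hbasis, by simp only [hregion, h10, h01, h11]⟩
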